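/- Semantics preservation of the FG-to-CG translation at boolean type: Suppose · ⊢_pc e_s : bool^{ℓ} ⇝ e_c for the closed FG expression e_s. Then e_s, evaluated under FG's big-step semantics from the empty heap, terminates producing boolean value v if and only if e_c, executed under CG's forcing semantics from the empty heap, terminates; and in that case the CG result is a labeled value of type Labeled ℓ bool whose content is v. -/

import Mathlib

/-!
The translation only inserts label bookkeeping, so the source and the translated program run in
lockstep. Forgetting types and labels, the translation becomes a relation `Tr` on raw expressions;
it is extended to run-time values so that an FG value `v` is related to `ret (label w)` exactly
when `w` is the CG counterpart of `v`, and it is stable under substituting related values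
(`Tr.subst`). Heaps are related pointwise (`HR`).

`simulation_forward`, by induction on FG evaluation, shows that an FG run is matched by a CG run
with related result and heap. `simulation_backward` is the converse. One step of a source program
corresponds to several nested CG forcing steps, so that proof is by strong induction on the size
of the forcing derivation, recorded by `CGForceN`.

Related values need not be equal (function bodies are translated), but they coincide on booleans.
That the result is a boolean follows from type preservation, for which security labels are
irrelevant: after erasing them subtyping becomes equality, and FG typing becomes simple typing with
references (`STyped`), for which `preservation` is proved with store typings.
-/

/-! ## Shared expression syntax for the FG and CG calculi (de Bruijn indices) -/

inductive Exp : Type where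
  | var (n : ℕ)
  | lam (e : Exp)
  | app (e1 e2 : Exp)
  | pair (e1 e2 : Exp)
  | fst (e : Exp)
  | snd (e : Exp)
  | inl (e : Exp)
  | inr (e : Exp)
  | case (e e1 e2 : Exp)      -- the two branches each bind one variable
  | tt
  | ff
  | unit
  | loc (n : ℕ)
  | new (e : Exp)
  | deref (e : Exp)
  | assign (e1 e2 : Exp)
  | label (e : Exp)
  | unlabel (e : Exp)
  | toLabeled (e : Exp)
  | ret (e : Exp)
  | bind (e1 e2 : Exp)        -- e2 binds one variable
deriving DecidableEq

namespace Exp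

/-- Shift free de Bruijn indices `≥ c` up by one. -/
def shift (c : ℕ) : Exp → Exp
  | var n => if n < c then var n else var (n + 1)
  | lam e => lam (e.shift (c + 1))
  | app e1 e2 => app (e1.shift c) (e2.shift c)
  | pair e1 e2 => pair (e1.shift c) (e2.shift c)
  | fst e => fst (e.shift c)
  | snd e => snd (e.shift c)
  | inl e => inl (e.shift c)
  | inr e => inr (e.shift c)
  | case e e1 e2 => case (e.shift c) (e1.shift (c + 1)) (e2.shift (c + 1))
  | tt => tt
  | ff => ff
  | unit => unit
  | loc n => loc n
  | new e => new (e.shift c)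
  | deref e => deref (e.shift c)
  | assign e1 e2 => assign (e1.shift c) (e2.shift c)
  | label e => label (e.shift c)
  | unlabel e => unlabel (e.shift c)
  | toLabeled e => toLabeled (e.shift c)
  | ret e => ret (e.shift c)
  | bind e1 e2 => bind (e1.shift c) (e2.shift (c + 1))

/-- Substitution `e[v/k]` of `v` for de Bruijn index `k` in `e`. -/
def subst : Exp → Exp → ℕ → Exp
  | var n, v, k => if n = k then v else if k < n then var (n - 1) else var n
  | lam e, v, k => lam (e.subst (v.shift 0) (k + 1))
  | app e1 e2, v, k => app (e1.subst v k) (e2.subst v k)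
  | pair e1 e2, v, k => pair (e1.subst v k) (e2.subst v k)
  | fst e, v, k => fst (e.subst v k)
  | snd e, v, k => snd (e.subst v k)
  | inl e, v, k => inl (e.subst v k)
  | inr e, v, k => inr (e.subst v k)
  | case e e1 e2, v, k =>
      case (e.subst v k) (e1.subst (v.shift 0) (k + 1)) (e2.subst (v.shift 0) (k + 1))
  | tt, _, _ => tt
  | ff, _, _ => ff
  | unit, _, _ => unit
  | loc n, _, _ => loc n
  | new e, v, k => new (e.subst v k)
  | deref e, v, k => deref (e.subst v k)
  | assign e1 e2, v, k => assign (e1.subst v k) (e2.subst v k)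
  | label e, v, k => label (e.subst v k)
  | unlabel e, v, k => unlabel (e.subst v k)
  | toLabeled e, v, k => toLabeled (e.subst v k)
  | ret e, v, k => ret (e.subst v k)
  | bind e1 e2, v, k => bind (e1.subst v k) (e2.subst (v.shift 0) (k + 1))

end Exp

/-- Heaps: locations are list indices; allocation appends. -/
abbrev Heap := List Exp

/-! ## Values -/

/-- Values of the FG language. -/
inductive FGVal : Exp → Prop where
  | lam : FGVal (.lam e)
  | pair : FGVal v1 → FGVal v2 → FGVal (.pair v1 v2)
  | inl : FGVal v → FGVal (.inl v)
  | inr : FGVal v → FGVal (.inr v)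
  | tt : FGVal .tt
  | ff : FGVal .ff
  | unit : FGVal .unit
  | loc : FGVal (.loc n)

/-- Values of the CG language (monadic expressions are suspended computations,
hence values; labeled values are values). -/
inductive CGVal : Exp → Prop where
  | lam : CGVal (.lam e)
  | pair : CGVal v1 → CGVal v2 → CGVal (.pair v1 v2)
  | inl : CGVal v → CGVal (.inl v)
  | inr : CGVal v → CGVal (.inr v)
  | tt : CGVal .tt
  | ff : CGVal .ff
  | unit : CGVal .unit
  | loc : CGVal (.loc n)
  | label : CGVal v → CGVal (.label v)
  | ret : CGVal (.ret e)
  | bind : CGVal (.bind e1 e2)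
  | unlabel : CGVal (.unlabel e)
  | toLabeled : CGVal (.toLabeled e)
  | new : CGVal (.new e)
  | deref : CGVal (.deref e)
  | assign : CGVal (.assign e1 e2)

/-! ## FG: deterministic big-step call-by-value evaluation over heaps -/

inductive FGEval : Heap → Exp → Heap → Exp → Prop where
  | lam : FGEval h (.lam e) h (.lam e)
  | tt : FGEval h .tt h .tt
  | ff : FGEval h .ff h .ff
  | unit : FGEval h .unit h .unit
  | loc : FGEval h (.loc n) h (.loc n)
  | app : FGEval h e1 h1 (.lam e) → FGEval h1 e2 h2 v2 →
      FGEval h2 (e.subst v2 0) h3 v → FGEval h (.app e1 e2) h3 v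
  | pair : FGEval h e1 h1 v1 → FGEval h1 e2 h2 v2 →
      FGEval h (.pair e1 e2) h2 (.pair v1 v2)
  | fst : FGEval h e h1 (.pair v1 v2) → FGEval h (.fst e) h1 v1
  | snd : FGEval h e h1 (.pair v1 v2) → FGEval h (.snd e) h1 v2
  | inl : FGEval h e h1 v → FGEval h (.inl e) h1 (.inl v)
  | inr : FGEval h e h1 v → FGEval h (.inr e) h1 (.inr v)
  | caseL : FGEval h e h1 (.inl v) → FGEval h1 (e1.subst v 0) h2 w →
      FGEval h (.case e e1 e2) h2 w
  | caseR : FGEval h e h1 (.inr v) → FGEval h1 (e2.subst v 0) h2 w →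
      FGEval h (.case e e1 e2) h2 w
  | new : FGEval h e h1 v → FGEval h (.new e) (h1 ++ [v]) (.loc h1.length)
  | deref : FGEval h e h1 (.loc n) → h1[n]? = some v → FGEval h (.deref e) h1 v
  | assign : FGEval h e1 h1 (.loc n) → FGEval h1 e2 h2 v →
      FGEval h (.assign e1 e2) (h2.set n v) .unit

/-! ## CG: pure big-step evaluation (no heap) and forcing semantics over heaps -/

/-- Pure (heap-free) big-step evaluation for CG.  Monadic expressions are
suspended computations and evaluate to themselves. -/
inductive CGPure : Exp → Exp → Prop where
  | lam : CGPure (.lam e) (.lam e)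
  | tt : CGPure .tt .tt
  | ff : CGPure .ff .ff
  | unit : CGPure .unit .unit
  | loc : CGPure (.loc n) (.loc n)
  | app : CGPure e1 (.lam e) → CGPure e2 v2 → CGPure (e.subst v2 0) v →
      CGPure (.app e1 e2) v
  | pair : CGPure e1 v1 → CGPure e2 v2 → CGPure (.pair e1 e2) (.pair v1 v2)
  | fst : CGPure e (.pair v1 v2) → CGPure (.fst e) v1
  | snd : CGPure e (.pair v1 v2) → CGPure (.snd e) v2
  | inl : CGPure e v → CGPure (.inl e) (.inl v)
  | inr : CGPure e v → CGPure (.inr e) (.inr v)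
  | caseL : CGPure e (.inl v) → CGPure (e1.subst v 0) w → CGPure (.case e e1 e2) w
  | caseR : CGPure e (.inr v) → CGPure (e2.subst v 0) w → CGPure (.case e e1 e2) w
  | label : CGPure e v → CGPure (.label e) (.label v)
  | ret : CGPure (.ret e) (.ret e)
  | bind : CGPure (.bind e1 e2) (.bind e1 e2)
  | unlabel : CGPure (.unlabel e) (.unlabel e)
  | toLabeled : CGPure (.toLabeled e) (.toLabeled e)
  | new : CGPure (.new e) (.new e)
  | deref : CGPure (.deref e) (.deref e)
  | assign : CGPure (.assign e1 e2) (.assign e1 e2)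

/-- Forcing semantics for CG's monadic computations: actually performs heap
reads, writes and allocations. -/
inductive CGForce : Heap → Exp → Heap → Exp → Prop where
  | ret : CGPure e (.ret e0) → CGPure e0 v → CGForce h e h v
  | bind : CGPure e (.bind e1 e2) → CGForce h e1 h1 v1 →
      CGForce h1 (e2.subst v1 0) h2 v → CGForce h e h2 v
  | unlabel : CGPure e (.unlabel e0) → CGPure e0 (.label v) → CGForce h e h v
  | toLabeled : CGPure e (.toLabeled e0) → CGForce h e0 h1 v →
      CGForce h e h1 (.label v)
  | new : CGPure e (.new e0) → CGPure e0 v → CGForce h e (h ++ [v]) (.loc h.length)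
  | deref : CGPure e (.deref e0) → CGPure e0 (.loc n) → h[n]? = some v →
      CGForce h e h v
  | assign : CGPure e (.assign e1 e2) → CGPure e1 (.loc n) → CGPure e2 v →
      CGForce h e (h.set n v) .unit

/-! ## FG types (every type constructor carries its outer security label) -/

inductive FGTy (L : Type) : Type where
  | bool (l : L)
  | unit (l : L)
  | fn (t1 : FGTy L) (le : L) (t2 : FGTy L) (l : L)
  | prod (t1 t2 : FGTy L) (l : L)
  | sum (t1 t2 : FGTy L) (l : L)
  | ref (t : FGTy L) (l : L)

/-- The outer label of an FG type (`(A^ℓ).lab = ℓ`).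
`τ.lab ≥ ℓ` is the protection judgment `τ ↘ ℓ`. -/
def FGTy.lab {L : Type} : FGTy L → L
  | .bool l => l
  | .unit l => l
  | .fn _ _ _ l => l
  | .prod _ _ l => l
  | .sum _ _ l => l
  | .ref _ l => l

/-- FG subtyping: structural, covariant in security labels, contravariant in
the pc-label of function types, invariant in the content type of references. -/
inductive FGSub {L : Type} [Lattice L] [BoundedOrder L] : FGTy L → FGTy L → Prop where
  | bool : l ≤ l' → FGSub (.bool l) (.bool l')
  | unit : l ≤ l' → FGSub (.unit l) (.unit l')
  | fn : FGSub τ1' τ1 → le' ≤ le → FGSub τ2 τ2' → l ≤ l' →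
      FGSub (.fn τ1 le τ2 l) (.fn τ1' le' τ2' l')
  | prod : FGSub τ1 τ1' → FGSub τ2 τ2' → l ≤ l' →
      FGSub (.prod τ1 τ2 l) (.prod τ1' τ2' l')
  | sum : FGSub τ1 τ1' → FGSub τ2 τ2' → l ≤ l' →
      FGSub (.sum τ1 τ2 l) (.sum τ1' τ2' l')
  | ref : l ≤ l' → FGSub (.ref τ l) (.ref τ l')

/-- The FG typing judgment `Γ ⊢_pc e : τ`. -/
inductive FGTyped {L : Type} [Lattice L] [BoundedOrder L] :
    List (FGTy L) → L → Exp → FGTy L → Prop where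
  | var : Γ[n]? = some τ → FGTyped Γ pc (.var n) τ
  | tt : FGTyped Γ pc .tt (.bool ⊥)
  | ff : FGTyped Γ pc .ff (.bool ⊥)
  | unit : FGTyped Γ pc .unit (.unit ⊥)
  | lam : FGTyped (τ1 :: Γ) le e τ2 → FGTyped Γ pc (.lam e) (.fn τ1 le τ2 ⊥)
  | app : FGTyped Γ pc e1 (.fn τ1 le τ2 l) → FGTyped Γ pc e2 τ1 →
      l ⊔ pc ≤ le → l ≤ τ2.lab → FGTyped Γ pc (.app e1 e2) τ2
  | pair : FGTyped Γ pc e1 τ1 → FGTyped Γ pc e2 τ2 →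
      FGTyped Γ pc (.pair e1 e2) (.prod τ1 τ2 ⊥)
  | fst : FGTyped Γ pc e (.prod τ1 τ2 l) → l ≤ τ1.lab → FGTyped Γ pc (.fst e) τ1
  | snd : FGTyped Γ pc e (.prod τ1 τ2 l) → l ≤ τ2.lab → FGTyped Γ pc (.snd e) τ2
  | inl : FGTyped Γ pc e τ1 → FGTyped Γ pc (.inl e) (.sum τ1 τ2 ⊥)
  | inr : FGTyped Γ pc e τ2 → FGTyped Γ pc (.inr e) (.sum τ1 τ2 ⊥)
  | case : FGTyped Γ pc e (.sum τ1 τ2 l) → FGTyped (τ1 :: Γ) (pc ⊔ l) e1 τ →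
      FGTyped (τ2 :: Γ) (pc ⊔ l) e2 τ → l ≤ τ.lab →
      FGTyped Γ pc (.case e e1 e2) τ
  | new : FGTyped Γ pc e τ → pc ≤ τ.lab → FGTyped Γ pc (.new e) (.ref τ ⊥)
  | deref : FGTyped Γ pc e (.ref τ l) → FGSub τ τ' → l ≤ τ'.lab →
      FGTyped Γ pc (.deref e) τ'
  | assign : FGTyped Γ pc e1 (.ref τ l) → FGTyped Γ pc e2 τ →
      pc ⊔ l ≤ τ.lab → FGTyped Γ pc (.assign e1 e2) (.unit ⊥)
  | sub : FGTyped Γ pc' e τ' → FGSub τ' τ → pc ≤ pc' → FGTyped Γ pc e τ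

/-! ## CG types -/

inductive CGTy (L : Type) : Type where
  | bool
  | unit
  | fn (t1 t2 : CGTy L)
  | prod (t1 t2 : CGTy L)
  | sum (t1 t2 : CGTy L)
  | ref (l : L) (t : CGTy L)
  | labeled (l : L) (t : CGTy L)
  | monad (l1 l2 : L) (t : CGTy L)   -- CG ℓ1 ℓ2 τ : pc-label ℓ1, taint label ℓ2

/-- CG subtyping: `Labeled ℓ τ` covariant in `ℓ` and `τ`; `CG ℓ1 ℓ2 τ`
contravariant in `ℓ1`, covariant in `ℓ2` and `τ`. -/
inductive CGSub {L : Type} [Lattice L] [BoundedOrder L] : CGTy L → CGTy L → Prop where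
  | bool : CGSub .bool .bool
  | unit : CGSub .unit .unit
  | fn : CGSub τ1' τ1 → CGSub τ2 τ2' → CGSub (.fn τ1 τ2) (.fn τ1' τ2')
  | prod : CGSub τ1 τ1' → CGSub τ2 τ2' → CGSub (.prod τ1 τ2) (.prod τ1' τ2')
  | sum : CGSub τ1 τ1' → CGSub τ2 τ2' → CGSub (.sum τ1 τ2) (.sum τ1' τ2')
  | ref : CGSub (.ref l τ) (.ref l τ)
  | labeled : CGSub τ τ' → l ≤ l' → CGSub (.labeled l τ) (.labeled l' τ')
  | monad : l1' ≤ l1 → l2 ≤ l2' → CGSub τ τ' →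
      CGSub (.monad l1 l2 τ) (.monad l1' l2' τ')

/-- The CG typing judgment `Γ ⊢ e : τ`. -/
inductive CGTyped {L : Type} [Lattice L] [BoundedOrder L] :
    List (CGTy L) → Exp → CGTy L → Prop where
  | var : Γ[n]? = some τ → CGTyped Γ (.var n) τ
  | tt : CGTyped Γ .tt .bool
  | ff : CGTyped Γ .ff .bool
  | unit : CGTyped Γ .unit .unit
  | lam : CGTyped (τ1 :: Γ) e τ2 → CGTyped Γ (.lam e) (.fn τ1 τ2)
  | app : CGTyped Γ e1 (.fn τ1 τ2) → CGTyped Γ e2 τ1 → CGTyped Γ (.app e1 e2) τ2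
  | pair : CGTyped Γ e1 τ1 → CGTyped Γ e2 τ2 → CGTyped Γ (.pair e1 e2) (.prod τ1 τ2)
  | fst : CGTyped Γ e (.prod τ1 τ2) → CGTyped Γ (.fst e) τ1
  | snd : CGTyped Γ e (.prod τ1 τ2) → CGTyped Γ (.snd e) τ2
  | inl : CGTyped Γ e τ1 → CGTyped Γ (.inl e) (.sum τ1 τ2)
  | inr : CGTyped Γ e τ2 → CGTyped Γ (.inr e) (.sum τ1 τ2)
  | case : CGTyped Γ e (.sum τ1 τ2) → CGTyped (τ1 :: Γ) e1 τ →
      CGTyped (τ2 :: Γ) e2 τ → CGTyped Γ (.case e e1 e2) τ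
  | ret : CGTyped Γ e τ → CGTyped Γ (.ret e) (.monad ⊤ ⊥ τ)
  | bind : CGTyped Γ e1 (.monad l1 l2 τ) → CGTyped (τ :: Γ) e2 (.monad l3 l4 τ') →
      l ≤ l1 → l ≤ l3 → l2 ≤ l3 → l2 ≤ l4 →
      CGTyped Γ (.bind e1 e2) (.monad l l4 τ')
  | label : CGTyped Γ e τ → CGTyped Γ (.label e) (.labeled l τ)
  | unlabel : CGTyped Γ e (.labeled l τ) → CGTyped Γ (.unlabel e) (.monad ⊤ l τ)
  | new : CGTyped Γ e (.labeled l τ) → CGTyped Γ (.new e) (.monad l ⊥ (.ref l τ))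
  | deref : CGTyped Γ e (.ref l' τ) → CGTyped Γ (.deref e) (.monad ⊤ ⊥ (.labeled l' τ))
  | assign : CGTyped Γ e1 (.ref l τ) → CGTyped Γ e2 (.labeled l τ) →
      CGTyped Γ (.assign e1 e2) (.monad l ⊥ .unit)
  | toLabeled : CGTyped Γ e (.monad l l' τ) →
      CGTyped Γ (.toLabeled e) (.monad l ⊥ (.labeled l' τ))
  | sub : CGTyped Γ e τ' → CGSub τ' τ → CGTyped Γ e τ

/-! ## The CG-to-FG type translation ⟦·⟧ -/

def toFG {L : Type} [Lattice L] [BoundedOrder L] : CGTy L → FGTy L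
  | .bool => .bool ⊥
  | .unit => .unit ⊥
  | .fn τ1 τ2 => .fn (toFG τ1) ⊤ (toFG τ2) ⊥
  | .prod τ1 τ2 => .prod (toFG τ1) (toFG τ2) ⊥
  | .sum τ1 τ2 => .sum (toFG τ1) (toFG τ2) ⊥
  | .ref l τ => .ref (.sum (toFG τ) (.unit ⊥) l) ⊥
  | .labeled l τ => .sum (toFG τ) (.unit ⊥) l
  | .monad l1 l2 τ => .fn (.unit ⊥) l1 (.sum (toFG τ) (.unit ⊥) l2) ⊥

/-! ## The FG-to-CG type translation: ⟦A^ℓ⟧ = Labeled ℓ ⟨A⟩ -/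

/-- `⟨A⟩`: translation of the unlabeled part of an FG type. -/
def trA {L : Type} [Lattice L] [BoundedOrder L] : FGTy L → CGTy L
  | .bool _ => .bool
  | .unit _ => .unit
  | .fn τ1 le τ2 _ =>
      .fn (.labeled τ1.lab (trA τ1)) (.monad le ⊥ (.labeled τ2.lab (trA τ2)))
  | .prod τ1 τ2 _ => .prod (.labeled τ1.lab (trA τ1)) (.labeled τ2.lab (trA τ2))
  | .sum τ1 τ2 _ => .sum (.labeled τ1.lab (trA τ1)) (.labeled τ2.lab (trA τ2))
  | .ref τ _ => .ref τ.lab (trA τ)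

/-- `⟦A^ℓ⟧ = Labeled ℓ ⟨A⟩`. -/
def toCG {L : Type} [Lattice L] [BoundedOrder L] (τ : FGTy L) : CGTy L :=
  .labeled τ.lab (trA τ)

/-! ## CG-to-FG expression translation `Γ ⊢ e : τ ⇝ e_F` -/

inductive CG2FG {L : Type} [Lattice L] [BoundedOrder L] :
    List (CGTy L) → Exp → CGTy L → Exp → Prop where
  | var : Γ[n]? = some τ → CG2FG Γ (.var n) τ (.var n)
  | tt : CG2FG Γ .tt .bool .tt
  | ff : CG2FG Γ .ff .bool .ff
  | unit : CG2FG Γ .unit .unit .unit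
  | lam : CG2FG (τ1 :: Γ) e τ2 eF → CG2FG Γ (.lam e) (.fn τ1 τ2) (.lam eF)
  | app : CG2FG Γ e1 (.fn τ1 τ2) eF1 → CG2FG Γ e2 τ1 eF2 →
      CG2FG Γ (.app e1 e2) τ2 (.app eF1 eF2)
  | pair : CG2FG Γ e1 τ1 eF1 → CG2FG Γ e2 τ2 eF2 →
      CG2FG Γ (.pair e1 e2) (.prod τ1 τ2) (.pair eF1 eF2)
  | fst : CG2FG Γ e (.prod τ1 τ2) eF → CG2FG Γ (.fst e) τ1 (.fst eF)
  | snd : CG2FG Γ e (.prod τ1 τ2) eF → CG2FG Γ (.snd e) τ2 (.snd eF)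
  | inl : CG2FG Γ e τ1 eF → CG2FG Γ (.inl e) (.sum τ1 τ2) (.inl eF)
  | inr : CG2FG Γ e τ2 eF → CG2FG Γ (.inr e) (.sum τ1 τ2) (.inr eF)
  | case : CG2FG Γ e (.sum τ1 τ2) eF → CG2FG (τ1 :: Γ) e1 τ eF1 →
      CG2FG (τ2 :: Γ) e2 τ eF2 → CG2FG Γ (.case e e1 e2) τ (.case eF eF1 eF2)
  | label : CG2FG Γ e τ eF → CG2FG Γ (.label e) (.labeled l τ) (.inl eF)
  | unlabel : CG2FG Γ e (.labeled l τ) eF →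
      CG2FG Γ (.unlabel e) (.monad ⊤ l τ) (.lam (eF.shift 0))
  | toLabeled : CG2FG Γ e (.monad l1 l2 τ) eF →
      CG2FG Γ (.toLabeled e) (.monad l1 ⊥ (.labeled l2 τ))
        (.lam (.inl (.app (eF.shift 0) .unit)))
  | ret : CG2FG Γ e τ eF → CG2FG Γ (.ret e) (.monad ⊤ ⊥ τ) (.lam (.inl (eF.shift 0)))
  | bind : CG2FG Γ e1 (.monad l1 l2 τ) eF1 →
      CG2FG (τ :: Γ) e2 (.monad l3 l4 τ') eF2 →
      l ≤ l1 → l ≤ l3 → l2 ≤ l3 → l2 ≤ l4 →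
      CG2FG Γ (.bind e1 e2) (.monad l l4 τ')
        (.lam (.case (.app (eF1.shift 0) .unit) (.app (eF2.shift 1) .unit)
          (.inr .unit)))
  | new : CG2FG Γ e (.labeled l τ) eF →
      CG2FG Γ (.new e) (.monad l ⊥ (.ref l τ)) (.lam (.inl (.new (eF.shift 0))))
  | deref : CG2FG Γ e (.ref l' τ) eF →
      CG2FG Γ (.deref e) (.monad ⊤ ⊥ (.labeled l' τ))
        (.lam (.inl (.deref (eF.shift 0))))
  | assign : CG2FG Γ e1 (.ref l τ) eF1 → CG2FG Γ e2 (.labeled l τ) eF2 →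
      CG2FG Γ (.assign e1 e2) (.monad l ⊥ .unit)
        (.lam (.inl (.assign (eF1.shift 0) (eF2.shift 0))))
  | sub : CG2FG Γ e τ' eF → CGSub τ' τ → CG2FG Γ e τ eF

/-! ## FG-to-CG expression translation `Γ ⊢_pc e : τ ⇝ e_c` -/

/-- `coerce_taint ≜ λx. toLabeled(bind(x, y. unlabel y))`. -/
def coerceTaint : Exp := .lam (.toLabeled (.bind (.var 0) (.unlabel (.var 0))))

inductive FG2CG {L : Type} [Lattice L] [BoundedOrder L] :
    List (FGTy L) → L → Exp → FGTy L → Exp → Prop where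
  | var : Γ[n]? = some τ → FG2CG Γ pc (.var n) τ (.ret (.var n))
  | tt : FG2CG Γ pc .tt (.bool ⊥) (.ret (.label .tt))
  | ff : FG2CG Γ pc .ff (.bool ⊥) (.ret (.label .ff))
  | unit : FG2CG Γ pc .unit (.unit ⊥) (.ret (.label .unit))
  | lam : FG2CG (τ1 :: Γ) le e τ2 ec →
      FG2CG Γ pc (.lam e) (.fn τ1 le τ2 ⊥) (.ret (.label (.lam ec)))
  | app : FG2CG Γ pc e1 (.fn τ1 le τ2 l) ec1 → FG2CG Γ pc e2 τ1 ec2 →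
      l ⊔ pc ≤ le → l ≤ τ2.lab →
      FG2CG Γ pc (.app e1 e2) τ2
        (.app coerceTaint
          (.bind ec1 (.bind (ec2.shift 0)
            (.bind (.unlabel (.var 1)) (.app (.var 0) (.var 1))))))
  | pair : FG2CG Γ pc e1 τ1 ec1 → FG2CG Γ pc e2 τ2 ec2 →
      FG2CG Γ pc (.pair e1 e2) (.prod τ1 τ2 ⊥)
        (.bind ec1 (.bind (ec2.shift 0) (.ret (.label (.pair (.var 1) (.var 0))))))
  | fst : FG2CG Γ pc e (.prod τ1 τ2 l) ec → l ≤ τ1.lab →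
      FG2CG Γ pc (.fst e) τ1
        (.app coerceTaint
          (.bind ec (.bind (.unlabel (.var 0)) (.ret (.fst (.var 0))))))
  | snd : FG2CG Γ pc e (.prod τ1 τ2 l) ec → l ≤ τ2.lab →
      FG2CG Γ pc (.snd e) τ2
        (.app coerceTaint
          (.bind ec (.bind (.unlabel (.var 0)) (.ret (.snd (.var 0))))))
  | inl : FG2CG Γ pc e τ1 ec →
      FG2CG Γ pc (.inl e) (.sum τ1 τ2 ⊥) (.bind ec (.ret (.label (.inl (.var 0)))))
  | inr : FG2CG Γ pc e τ2 ec →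
      FG2CG Γ pc (.inr e) (.sum τ1 τ2 ⊥) (.bind ec (.ret (.label (.inr (.var 0)))))
  | case : FG2CG Γ pc e (.sum τ1 τ2 l) ec →
      FG2CG (τ1 :: Γ) (pc ⊔ l) e1 τ ec1 → FG2CG (τ2 :: Γ) (pc ⊔ l) e2 τ ec2 →
      l ≤ τ.lab →
      FG2CG Γ pc (.case e e1 e2) τ
        (.app coerceTaint
          (.bind ec (.bind (.unlabel (.var 0))
            (.case (.var 0) ((ec1.shift 1).shift 1) ((ec2.shift 1).shift 1)))))
  | new : FG2CG Γ pc e τ ec → pc ≤ τ.lab →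
      FG2CG Γ pc (.new e) (.ref τ ⊥)
        (.bind ec (.bind (.new (.var 0)) (.ret (.label (.var 0)))))
  | deref : FG2CG Γ pc e (.ref τ l) ec → FGSub τ τ' → l ≤ τ'.lab →
      FG2CG Γ pc (.deref e) τ'
        (.app coerceTaint
          (.bind ec (.bind (.unlabel (.var 0)) (.deref (.var 0)))))
  | assign : FG2CG Γ pc e1 (.ref τ l) ec1 → FG2CG Γ pc e2 τ ec2 →
      pc ⊔ l ≤ τ.lab →
      FG2CG Γ pc (.assign e1 e2) (.unit ⊥)
        (.bind (.toLabeled (.bind ec1 (.bind (ec2.shift 0)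
          (.bind (.unlabel (.var 1)) (.assign (.var 0) (.var 1))))))
          (.ret (.label .unit)))
  | sub : FG2CG Γ pc' e τ' ec → FGSub τ' τ → pc ≤ pc' → FG2CG Γ pc e τ ec

/-! ## STATEMENT 9: Semantics preservation of the FG-to-CG translation at boolean type -/

/-! ### De Bruijn identities -/

namespace Exp

theorem shift_shift (e : Exp) : ∀ {a c : ℕ}, a ≤ c →
    (e.shift c).shift a = (e.shift a).shift (c + 1) := by
  induction e with
  | var n =>
    intro a c hac
    simp only [shift]
    split_ifs <;> simp only [shift] <;> split_ifs <;> first | rfl | omega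
  | _ => intro a c hac; simp_all [shift]

theorem subst_shift_cancel (e : Exp) : ∀ (v : Exp) (k : ℕ), (e.shift k).subst v k = e := by
  induction e with
  | var n =>
    intro v k
    simp only [shift]
    split_ifs <;> simp only [subst] <;> split_ifs <;> first | rfl | omega
  | _ => intro v k; simp_all [shift, subst]

theorem shift_subst (e : Exp) : ∀ (v : Exp) {a k : ℕ}, a ≤ k →
    (e.subst v k).shift a = (e.shift a).subst (v.shift a) (k + 1) := by
  induction e with
  | var n =>
    intro v a k hak
    simp only [shift, subst]
    split_ifs <;> simp only [shift, subst] <;> split_ifs <;>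
      first | rfl | omega | (congr 1; omega)
  | _ =>
    intro v a k hak
    simp_all [shift, subst, shift_shift v (Nat.zero_le a)]

end Exp

/-! ### The untyped translation relation -/

/-- The label-free graph of the FG-to-CG translation, extended to run-time values (locations, and
pairs and injections of values). The extension makes it stable under substituting related values;
on values it has the form `Tr v (.ret (.label w))`, which serves as the relation between an FG
value `v` and the content `w` of the corresponding CG labeled value. -/
inductive Tr : Exp → Exp → Prop where
  | var : Tr (.var n) (.ret (.var n))
  | tt : Tr .tt (.ret (.label .tt))
  | ff : Tr .ff (.ret (.label .ff))
  | unit : Tr .unit (.ret (.label .unit))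
  | loc : Tr (.loc n) (.ret (.label (.loc n)))
  | lam : Tr e c → Tr (.lam e) (.ret (.label (.lam c)))
  | pairV : Tr v1 (.ret (.label w1)) → Tr v2 (.ret (.label w2)) →
      Tr (.pair v1 v2) (.ret (.label (.pair (.label w1) (.label w2))))
  | inlV : Tr v (.ret (.label w)) → Tr (.inl v) (.ret (.label (.inl (.label w))))
  | inrV : Tr v (.ret (.label w)) → Tr (.inr v) (.ret (.label (.inr (.label w))))
  | app : Tr e1 c1 → Tr e2 c2 →
      Tr (.app e1 e2)
        (.app coerceTaint
          (.bind c1 (.bind (c2.shift 0)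
            (.bind (.unlabel (.var 1)) (.app (.var 0) (.var 1))))))
  | pair : Tr e1 c1 → Tr e2 c2 →
      Tr (.pair e1 e2)
        (.bind c1 (.bind (c2.shift 0) (.ret (.label (.pair (.var 1) (.var 0))))))
  | fst : Tr e c →
      Tr (.fst e)
        (.app coerceTaint (.bind c (.bind (.unlabel (.var 0)) (.ret (.fst (.var 0))))))
  | snd : Tr e c →
      Tr (.snd e)
        (.app coerceTaint (.bind c (.bind (.unlabel (.var 0)) (.ret (.snd (.var 0))))))
  | inl : Tr e c → Tr (.inl e) (.bind c (.ret (.label (.inl (.var 0)))))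
  | inr : Tr e c → Tr (.inr e) (.bind c (.ret (.label (.inr (.var 0)))))
  | case : Tr e c → Tr e1 c1 → Tr e2 c2 →
      Tr (.case e e1 e2)
        (.app coerceTaint
          (.bind c (.bind (.unlabel (.var 0))
            (.case (.var 0) ((c1.shift 1).shift 1) ((c2.shift 1).shift 1)))))
  | new : Tr e c →
      Tr (.new e) (.bind c (.bind (.new (.var 0)) (.ret (.label (.var 0)))))
  | deref : Tr e c →
      Tr (.deref e)
        (.app coerceTaint (.bind c (.bind (.unlabel (.var 0)) (.deref (.var 0)))))
  | assign : Tr e1 c1 → Tr e2 c2 →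
      Tr (.assign e1 e2)
        (.bind (.toLabeled (.bind c1 (.bind (c2.shift 0)
          (.bind (.unlabel (.var 1)) (.assign (.var 0) (.var 1))))))
          (.ret (.label .unit)))

theorem FG2CG.tr {L : Type} [Lattice L] [BoundedOrder L] {Γ : List (FGTy L)} {pc : L}
    {e c : Exp} {τ : FGTy L} (h : FG2CG Γ pc e τ c) : Tr e c := by
  induction h <;> first | assumption | (constructor <;> assumption)

theorem shift_coerceTaint (k : ℕ) : coerceTaint.shift k = coerceTaint := by
  simp [coerceTaint, Exp.shift]

theorem subst_coerceTaint (v : Exp) (k : ℕ) : coerceTaint.subst v k = coerceTaint := by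
  simp [coerceTaint, Exp.subst]

theorem Tr.shift {e c : Exp} (h : Tr e c) : ∀ k, Tr (e.shift k) (c.shift k) := by
  induction h with
  | var =>
    intro k
    simp only [Exp.shift]
    split_ifs <;> exact .var
  | app _ _ ih1 ih2 =>
    intro k
    simpa [Exp.shift, shift_coerceTaint, Exp.shift_shift] using Tr.app (ih1 k) (ih2 k)
  | pair _ _ ih1 ih2 =>
    intro k
    simpa [Exp.shift, Exp.shift_shift] using Tr.pair (ih1 k) (ih2 k)
  | assign _ _ ih1 ih2 =>
    intro k
    simpa [Exp.shift, Exp.shift_shift] using Tr.assign (ih1 k) (ih2 k)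
  | case _ _ _ ih ih1 ih2 =>
    intro k
    simpa [Exp.shift, shift_coerceTaint, Exp.shift_shift]
      using Tr.case (ih k) (ih1 (k + 1)) (ih2 (k + 1))
  | fst _ ih =>
    intro k; simpa [Exp.shift, shift_coerceTaint] using Tr.fst (ih k)
  | snd _ ih =>
    intro k; simpa [Exp.shift, shift_coerceTaint] using Tr.snd (ih k)
  | deref _ ih =>
    intro k; simpa [Exp.shift, shift_coerceTaint] using Tr.deref (ih k)
  | _ => intro k; simp_all only [Exp.shift]; constructor <;> simp_all

theorem Tr.subst {e c : Exp} (h : Tr e c) : ∀ {v w : Exp} (k : ℕ), Tr v (.ret (.label w)) →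
    Tr (e.subst v k) (c.subst (.label w) k) := by
  induction h with
  | var =>
    intro v w k hv
    simp only [Exp.subst]
    split_ifs <;> first | exact .var | exact hv
  | lam _ ih =>
    intro v w k hv
    exact .lam (ih (k + 1) (hv.shift 0))
  | app _ _ ih1 ih2 =>
    intro v w k hv
    simpa [Exp.subst, Exp.shift, subst_coerceTaint, Exp.shift_subst]
      using Tr.app (ih1 k hv) (ih2 k hv)
  | pair _ _ ih1 ih2 =>
    intro v w k hv
    simpa [Exp.subst, Exp.shift, Exp.shift_subst] using Tr.pair (ih1 k hv) (ih2 k hv)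
  | assign _ _ ih1 ih2 =>
    intro v w k hv
    simpa [Exp.subst, Exp.shift, Exp.shift_subst] using Tr.assign (ih1 k hv) (ih2 k hv)
  | case _ _ _ ih ih1 ih2 =>
    intro v w k hv
    have := Tr.case (ih k hv) (ih1 (k + 1) (hv.shift 0)) (ih2 (k + 1) (hv.shift 0))
    simpa [Exp.subst, Exp.shift, subst_coerceTaint, Exp.shift_subst, Exp.shift_shift]
      using this
  | fst _ ih =>
    intro v w k hv; simpa [Exp.subst, subst_coerceTaint] using Tr.fst (ih k hv)
  | snd _ ih =>
    intro v w k hv; simpa [Exp.subst, subst_coerceTaint] using Tr.snd (ih k hv)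
  | deref _ ih =>
    intro v w k hv; simpa [Exp.subst, subst_coerceTaint] using Tr.deref (ih k hv)
  | inl _ ih => intro v w k hv; simpa [Exp.subst] using Tr.inl (ih k hv)
  | inr _ ih => intro v w k hv; simpa [Exp.subst] using Tr.inr (ih k hv)
  | new _ ih => intro v w k hv; simpa [Exp.subst] using Tr.new (ih k hv)
  | pairV _ _ ih1 ih2 =>
    intro v w k hv
    exact .pairV (ih1 k hv) (ih2 k hv)
  | inlV _ ih => intro v w k hv; exact .inlV (ih k hv)
  | inrV _ ih => intro v w k hv; exact .inrV (ih k hv)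
  | tt => intro v w k hv; exact .tt
  | ff => intro v w k hv; exact .ff
  | unit => intro v w k hv; exact .unit
  | loc => intro v w k hv; exact .loc

/-! ### Values evaluate to themselves -/

theorem Tr.fgVal : ∀ {v w : Exp}, Tr v (.ret (.label w)) → FGVal v
  | _, _, .tt => .tt
  | _, _, .ff => .ff
  | _, _, .unit => .unit
  | _, _, .loc => .loc
  | _, _, .lam _ => .lam
  | _, _, .pairV h1 h2 => .pair h1.fgVal h2.fgVal
  | _, _, .inlV h => .inl h.fgVal
  | _, _, .inrV h => .inr h.fgVal

theorem Tr.cgVal : ∀ {v w : Exp}, Tr v (.ret (.label w)) → CGVal w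
  | _, _, .tt => .tt
  | _, _, .ff => .ff
  | _, _, .unit => .unit
  | _, _, .loc => .loc
  | _, _, .lam _ => .lam
  | _, _, .pairV h1 h2 => .pair (.label h1.cgVal) (.label h2.cgVal)
  | _, _, .inlV h => .inl (.label h.cgVal)
  | _, _, .inrV h => .inr (.label h.cgVal)

theorem FGVal.eval {v : Exp} (hv : FGVal v) (h : Heap) : FGEval h v h v := by
  induction hv <;> constructor <;> assumption

theorem FGVal.eval_eq {v : Exp} (hv : FGVal v) :
    ∀ {h h' : Heap} {u : Exp}, FGEval h v h' u → h' = h ∧ u = v := by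
  induction hv with
  | pair _ _ ih1 ih2 =>
    rintro h h' u (_ | _)
    rename_i a b
    obtain ⟨rfl, rfl⟩ := ih1 a
    obtain ⟨rfl, rfl⟩ := ih2 b
    exact ⟨rfl, rfl⟩
  | inl _ ih =>
    rintro h h' u (_ | _)
    rename_i a
    obtain ⟨rfl, rfl⟩ := ih a
    exact ⟨rfl, rfl⟩
  | inr _ ih =>
    rintro h h' u (_ | _)
    rename_i a
    obtain ⟨rfl, rfl⟩ := ih a
    exact ⟨rfl, rfl⟩
  | _ => intro h h' u he; cases he; exact ⟨rfl, rfl⟩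

theorem CGVal.pure {v : Exp} (hv : CGVal v) : CGPure v v := by
  induction hv <;> constructor <;> assumption

theorem CGVal.pure_eq {v : Exp} (hv : CGVal v) : ∀ {u : Exp}, CGPure v u → u = v := by
  induction hv with
  | pair _ _ ih1 ih2 =>
    intro u h
    cases h with
    | pair a b => rw [ih1 a, ih2 b]
  | inl _ ih =>
    intro u h
    cases h with
    | inl a => rw [ih a]
  | inr _ ih =>
    intro u h
    cases h with
    | inr a => rw [ih a]
  | label _ ih =>
    intro u h
    cases h with
    | label a => rw [ih a]
  | _ => intro u h; cases h; rfl

/-! ### Head reductions of CG computations -/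

/-- CG forcing indexed by a size of the derivation, as a measure for strong induction. -/
inductive CGForceN : ℕ → Heap → Exp → Heap → Exp → Prop where
  | ret : CGPure e (.ret e0) → CGPure e0 v → CGForceN n h e h v
  | bind : CGPure e (.bind e1 e2) → CGForceN n h e1 h1 v1 →
      CGForceN m h1 (e2.subst v1 0) h2 v → CGForceN (n + m + 1) h e h2 v
  | unlabel : CGPure e (.unlabel e0) → CGPure e0 (.label v) → CGForceN n h e h v
  | toLabeled : CGPure e (.toLabeled e0) → CGForceN n h e0 h1 v →
      CGForceN (n + 1) h e h1 (.label v)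
  | new : CGPure e (.new e0) → CGPure e0 v → CGForceN n h e (h ++ [v]) (.loc h.length)
  | deref : CGPure e (.deref e0) → CGPure e0 (.loc k) → h[k]? = some v →
      CGForceN n h e h v
  | assign : CGPure e (.assign e1 e2) → CGPure e1 (.loc k) → CGPure e2 v →
      CGForceN n h e (h.set k v) .unit

theorem CGForce.toN {h h' : Heap} {e r : Exp} (hf : CGForce h e h' r) :
    ∃ n, CGForceN n h e h' r := by
  induction hf with
  | ret a b => exact ⟨0, .ret a b⟩
  | bind a _ _ ih1 ih2 =>
    obtain ⟨n, hn⟩ := ih1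
    obtain ⟨m, hm⟩ := ih2
    exact ⟨_, .bind a hn hm⟩
  | unlabel a b => exact ⟨0, .unlabel a b⟩
  | toLabeled a _ ih =>
    obtain ⟨n, hn⟩ := ih
    exact ⟨_, .toLabeled a hn⟩
  | new a b => exact ⟨0, .new a b⟩
  | deref a b c => exact ⟨0, .deref a b c⟩
  | assign a b c => exact ⟨0, .assign a b c⟩

/-- Forcing an expression only depends on the suspended computation it evaluates to. -/
theorem CGForceN.congr {n : ℕ} {h h' : Heap} {e e' r : Exp}
    (hp : ∀ w, CGPure e w → CGPure e' w) (hf : CGForceN n h e h' r) : CGForceN n h e' h' r := by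
  cases hf with
  | ret a b => exact .ret (hp _ a) b
  | bind a b c => exact .bind (hp _ a) b c
  | unlabel a b => exact .unlabel (hp _ a) b
  | toLabeled a b => exact .toLabeled (hp _ a) b
  | new a b => exact .new (hp _ a) b
  | deref a b c => exact .deref (hp _ a) b c
  | assign a b c => exact .assign (hp _ a) b c

theorem CGForce.congr {h h' : Heap} {e e' r : Exp}
    (hp : ∀ w, CGPure e w → CGPure e' w) (hf : CGForce h e h' r) : CGForce h e' h' r := by
  cases hf with
  | ret a b => exact .ret (hp _ a) b
  | bind a b c => exact .bind (hp _ a) b c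
  | unlabel a b => exact .unlabel (hp _ a) b
  | toLabeled a b => exact .toLabeled (hp _ a) b
  | new a b => exact .new (hp _ a) b
  | deref a b c => exact .deref (hp _ a) b c
  | assign a b c => exact .assign (hp _ a) b c

theorem CGForceN.inv_ret {n : ℕ} {h h' : Heap} {e r : Exp}
    (hf : CGForceN n h (.ret e) h' r) : h' = h ∧ CGPure e r := by
  cases hf with
  | ret hp hq => cases hp; exact ⟨rfl, hq⟩
  | unlabel hp | bind hp | toLabeled hp | new hp | deref hp | assign hp => cases hp

theorem CGForceN.inv_unlabel {n : ℕ} {h h' : Heap} {e r : Exp}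
    (hf : CGForceN n h (.unlabel e) h' r) : h' = h ∧ CGPure e (.label r) := by
  cases hf with
  | unlabel hp hq => cases hp; exact ⟨rfl, hq⟩
  | ret hp | bind hp | toLabeled hp | new hp | deref hp | assign hp => cases hp

theorem CGForceN.inv_bind {n : ℕ} {h h' : Heap} {e1 e2 r : Exp}
    (hf : CGForceN n h (.bind e1 e2) h' r) :
    ∃ m k h1 v, m < n ∧ k < n ∧ CGForceN m h e1 h1 v ∧
      CGForceN k h1 (e2.subst v 0) h' r := by
  cases hf with
  | bind hp h1 h2 => cases hp; exact ⟨_, _, _, _, by omega, by omega, h1, h2⟩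
  | ret hp | unlabel hp | toLabeled hp | new hp | deref hp | assign hp => cases hp

theorem CGForceN.inv_toLabeled {n : ℕ} {h h' : Heap} {e r : Exp}
    (hf : CGForceN n h (.toLabeled e) h' r) :
    ∃ m v, m < n ∧ r = .label v ∧ CGForceN m h e h' v := by
  cases hf with
  | toLabeled hp h1 => cases hp; exact ⟨_, _, by omega, rfl, h1⟩
  | ret hp | unlabel hp | bind hp | new hp | deref hp | assign hp => cases hp

theorem CGForceN.inv_new {n : ℕ} {h h' : Heap} {e r : Exp}
    (hf : CGForceN n h (.new e) h' r) :
    ∃ v, CGPure e v ∧ h' = h ++ [v] ∧ r = .loc h.length := by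
  cases hf with
  | new hp hq => cases hp; exact ⟨_, hq, rfl, rfl⟩
  | ret hp | unlabel hp | bind hp | toLabeled hp | deref hp | assign hp => cases hp

theorem CGForceN.inv_deref {n : ℕ} {h h' : Heap} {e r : Exp}
    (hf : CGForceN n h (.deref e) h' r) :
    ∃ k, CGPure e (.loc k) ∧ h[k]? = some r ∧ h' = h := by
  cases hf with
  | deref hp hq hr => cases hp; exact ⟨_, hq, hr, rfl⟩
  | ret hp | unlabel hp | bind hp | toLabeled hp | new hp | assign hp => cases hp

theorem CGForceN.inv_assign {n : ℕ} {h h' : Heap} {e1 e2 r : Exp}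
    (hf : CGForceN n h (.assign e1 e2) h' r) :
    ∃ k v, CGPure e1 (.loc k) ∧ CGPure e2 v ∧ h' = h.set k v ∧ r = .unit := by
  cases hf with
  | assign hp hq hr => cases hp; exact ⟨_, _, hq, hr, rfl, rfl⟩
  | ret hp | unlabel hp | bind hp | toLabeled hp | new hp | deref hp => cases hp

/-- `coerceTaint` does not change the result of a computation returning a labeled value. -/
theorem CGForce.coerce {h h' : Heap} {a b w : Exp}
    (hf : CGForce h (.bind a b) h' (.label w)) (hw : CGVal w) :
    CGForce h (.app coerceTaint (.bind a b)) h' (.label w) := by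
  have hp : CGPure (.app coerceTaint (.bind a b))
      (.toLabeled (.bind (.bind a b) (.unlabel (.var 0)))) := by
    refine .app .lam .bind ?_
    simp only [Exp.subst]
    exact .toLabeled
  have hu : CGForce h' ((Exp.unlabel (.var 0)).subst (.label w) 0) h' w := by
    simp only [Exp.subst]
    exact .unlabel .unlabel hw.label.pure
  exact .toLabeled hp (.bind .bind hf hu)

theorem CGForceN.inv_coerce {n : ℕ} {h h' : Heap} {a b r : Exp}
    (hf : CGForceN n h (.app coerceTaint (.bind a b)) h' r) :
    ∃ m r', m < n ∧ CGForceN m h (.bind a b) h' r' ∧ (CGVal r' → r = r') := by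
  have hf' : CGForceN n h (.toLabeled (.bind (.bind a b) (.unlabel (.var 0)))) h' r := by
    refine hf.congr fun w hw => ?_
    rcases hw with _ | _ | _ | _ | _ | ⟨h1, h2, h3⟩
    cases h1
    cases h2
    simpa [Exp.subst] using h3
  obtain ⟨m, v, hm, rfl, hf1⟩ := hf'.inv_toLabeled
  obtain ⟨m1, k, h1, r', hm1, hk, hf2, hf3⟩ := hf1.inv_bind
  obtain ⟨rfl, hp⟩ := CGForceN.inv_unlabel (e := r') (by simpa [Exp.subst] using hf3)
  exact ⟨m1, r', by omega, hf2, fun hr => hr.pure_eq hp⟩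

/-! ### Simulation -/

/-- CG heaps store pointwise the labeled counterparts of the FG heap's values. -/
def HR (h H : Heap) : Prop :=
  List.Forall₂ (fun v r => ∃ w, r = .label w ∧ Tr v (.ret (.label w))) h H

theorem HR.append {h H : Heap} (hH : HR h H) {v w : Exp} (hv : Tr v (.ret (.label w))) :
    HR (h ++ [v]) (H ++ [.label w]) :=
  List.rel_append hH (.cons ⟨w, rfl, hv⟩ .nil)

theorem HR.set {h H : Heap} (hH : HR h H) {v w : Exp} (hv : Tr v (.ret (.label w))) (k : ℕ) :
    HR (h.set k v) (H.set k (.label w)) := by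
  induction hH generalizing k with
  | nil => exact .nil
  | cons a b ih =>
    cases k with
    | zero => exact .cons ⟨w, rfl, hv⟩ b
    | succ k => exact .cons a (ih k)

theorem HR.get {h H : Heap} (hH : HR h H) : ∀ {k : ℕ} {v : Exp}, h[k]? = some v →
    ∃ w, H[k]? = some (.label w) ∧ Tr v (.ret (.label w)) := by
  induction hH with
  | nil => intro k v hk; simp at hk
  | cons a b ih =>
    intro k v hk
    cases k with
    | zero =>
      obtain ⟨w, rfl, hw⟩ := a
      obtain rfl : _ = v := by simpa using hk
      exact ⟨w, by simp, hw⟩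
    | succ k => simpa using ih (by simpa using hk)

theorem HR.get' {h H : Heap} (hH : HR h H) : ∀ {k : ℕ} {r : Exp}, H[k]? = some r →
    ∃ v w, h[k]? = some v ∧ r = .label w ∧ Tr v (.ret (.label w)) := by
  induction hH with
  | nil => intro k v hk; simp at hk
  | cons a b ih =>
    intro k v hk
    cases k with
    | zero =>
      obtain ⟨w, rfl, hw⟩ := a
      obtain rfl : _ = v := by simpa using hk
      exact ⟨_, w, by simp, rfl, hw⟩
    | succ k => simpa using ih (by simpa using hk)

theorem HR.length {h H : Heap} (hH : HR h H) : h.length = H.length :=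
  List.Forall₂.length_eq hH

/-- Removes the two dummy binders placed under the branch of a translated `case`. -/
theorem Exp.subst_shift_branch (c v w : Exp) :
    (((c.shift 1).shift 1).subst v 2).subst w 1 = c := by
  rw [Exp.shift_shift c (le_refl 1), Exp.subst_shift_cancel, Exp.subst_shift_cancel]

theorem simulation_forward {h h1 : Heap} {e v : Exp} (he : FGEval h e h1 v) :
    ∀ {c : Exp} {H : Heap}, Tr e c → HR h H →
      ∃ H1 w, CGForce H c H1 (.label w) ∧ Tr v (.ret (.label w)) ∧ HR h1 H1 := by
  -- An expression related to `ret (label w)` is a value, hence evaluates to itself.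
  have value : ∀ {h h1 H : Heap} {e v w : Exp}, FGEval h e h1 v → Tr e (.ret (.label w)) →
      HR h H → ∃ H1 u, CGForce H (.ret (.label w)) H1 (.label u) ∧
        Tr v (.ret (.label u)) ∧ HR h1 H1 := by
    intro h h1 H e v w he ht hH
    obtain ⟨rfl, rfl⟩ := ht.fgVal.eval_eq he
    exact ⟨H, w, .ret .ret ht.cgVal.label.pure, ht, hH⟩
  induction he with
  | lam => intro c H ht hH; cases ht with | lam hb => exact value .lam (.lam hb) hH
  | tt => intro c H ht hH; cases ht; exact value .tt .tt hH
  | ff => intro c H ht hH; cases ht; exact value .ff .ff hH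
  | unit => intro c H ht hH; cases ht; exact value .unit .unit hH
  | loc => intro c H ht hH; cases ht; exact value .loc .loc hH
  | app _ _ _ ih1 ih2 ih3 =>
    intro c H ht hH
    cases ht with
    | app t1 t2 =>
      obtain ⟨H1, wf, f1, tf, hH1⟩ := ih1 t1 hH
      obtain ⟨H2, wa, f2, ta, hH2⟩ := ih2 t2 hH1
      cases tf with
      | lam tb =>
        obtain ⟨H3, w, f3, t3, hH3⟩ := ih3 (tb.subst 0 ta) hH2
        refine ⟨H3, w, .coerce (.bind .bind f1 ?_) t3.cgVal, t3, hH3⟩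
        simp only [Exp.subst, Exp.subst_shift_cancel, Exp.shift]
        refine .bind .bind f2 ?_
        simp [Exp.subst, Exp.subst_shift_cancel, Exp.shift]
        refine .bind .bind (.unlabel .unlabel (.label .lam)) ?_
        simp [Exp.subst, Exp.subst_shift_cancel]
        exact f3.congr fun u hu => .app .lam ta.cgVal.label.pure hu
  | pair d1 d2 ih1 ih2 =>
    intro c H ht hH
    cases ht with
    | pairV t1 t2 => exact value (.pair d1 d2) (.pairV t1 t2) hH
    | pair t1 t2 =>
      obtain ⟨H1, w1, f1, t1, hH1⟩ := ih1 t1 hH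
      obtain ⟨H2, w2, f2, t2, hH2⟩ := ih2 t2 hH1
      refine ⟨H2, _, .bind .bind f1 ?_, .pairV t1 t2, hH2⟩
      simp only [Exp.subst, Exp.subst_shift_cancel, Exp.shift]
      refine .bind .bind f2 ?_
      simp [Exp.subst, Exp.subst_shift_cancel]
      exact .ret .ret (Tr.pairV t1 t2).cgVal.label.pure
  | fst _ ih =>
    intro c H ht hH
    cases ht with
    | fst t =>
      obtain ⟨H1, w, f, t, hH1⟩ := ih t hH
      cases t with
      | pairV t1 t2 =>
        refine ⟨H1, _, .coerce (.bind .bind f ?_) t1.cgVal, t1, hH1⟩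
        simp [Exp.subst]
        refine .bind .bind (.unlabel .unlabel (Tr.pairV t1 t2).cgVal.label.pure) ?_
        simp [Exp.subst]
        exact .ret .ret (.fst (Tr.pairV t1 t2).cgVal.pure)
  | snd _ ih =>
    intro c H ht hH
    cases ht with
    | snd t =>
      obtain ⟨H1, w, f, t, hH1⟩ := ih t hH
      cases t with
      | pairV t1 t2 =>
        refine ⟨H1, _, .coerce (.bind .bind f ?_) t2.cgVal, t2, hH1⟩
        simp [Exp.subst]
        refine .bind .bind (.unlabel .unlabel (Tr.pairV t1 t2).cgVal.label.pure) ?_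
        simp [Exp.subst]
        exact .ret .ret (.snd (Tr.pairV t1 t2).cgVal.pure)
  | inl d ih =>
    intro c H ht hH
    cases ht with
    | inlV t => exact value (.inl d) (.inlV t) hH
    | inl t =>
      obtain ⟨H1, w, f, t, hH1⟩ := ih t hH
      refine ⟨H1, _, .bind .bind f ?_, .inlV t, hH1⟩
      simp [Exp.subst]
      exact .ret .ret (Tr.inlV t).cgVal.label.pure
  | inr d ih =>
    intro c H ht hH
    cases ht with
    | inrV t => exact value (.inr d) (.inrV t) hH
    | inr t =>
      obtain ⟨H1, w, f, t, hH1⟩ := ih t hH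
      refine ⟨H1, _, .bind .bind f ?_, .inrV t, hH1⟩
      simp [Exp.subst]
      exact .ret .ret (Tr.inrV t).cgVal.label.pure
  | caseL _ _ ih ih1 =>
    intro c H ht hH
    cases ht with
    | case t t1 t2 =>
      obtain ⟨H1, w, f, t, hH1⟩ := ih t hH
      cases t with
      | inlV t =>
        obtain ⟨H2, w2, f2, t3, hH2⟩ := ih1 (t1.subst 0 t) hH1
        refine ⟨H2, _, .coerce (.bind .bind f ?_) t3.cgVal, t3, hH2⟩
        simp [Exp.subst]
        refine .bind .bind (.unlabel .unlabel (Tr.inlV t).cgVal.label.pure) ?_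
        simp [Exp.subst, Exp.subst_shift_branch]
        exact f2.congr fun u hu => .caseL (Tr.inlV t).cgVal.pure hu
  | caseR _ _ ih ih1 =>
    intro c H ht hH
    cases ht with
    | case t t1 t2 =>
      obtain ⟨H1, w, f, t, hH1⟩ := ih t hH
      cases t with
      | inrV t =>
        obtain ⟨H2, w2, f2, t3, hH2⟩ := ih1 (t2.subst 0 t) hH1
        refine ⟨H2, _, .coerce (.bind .bind f ?_) t3.cgVal, t3, hH2⟩
        simp [Exp.subst]
        refine .bind .bind (.unlabel .unlabel (Tr.inrV t).cgVal.label.pure) ?_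
        simp [Exp.subst, Exp.subst_shift_branch]
        exact f2.congr fun u hu => .caseR (Tr.inrV t).cgVal.pure hu
  | new _ ih =>
    intro c H ht hH
    cases ht with
    | new t =>
      obtain ⟨H1, w, f, t, hH1⟩ := ih t hH
      refine ⟨H1 ++ [.label w], _, .bind .bind f ?_, .loc, hH1.append t⟩
      simp [Exp.subst]
      refine .bind .bind (.new .new t.cgVal.label.pure) ?_
      simp [Exp.subst, hH1.length]
      exact .ret .ret (.label .loc)
  | deref _ hn ih =>
    intro c H ht hH
    cases ht with
    | deref t =>
      obtain ⟨H1, w, f, t, hH1⟩ := ih t hH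
      cases t with
      | loc =>
        obtain ⟨w, hw, tw⟩ := hH1.get hn
        refine ⟨H1, w, .coerce (.bind .bind f ?_) tw.cgVal, tw, hH1⟩
        simp [Exp.subst]
        refine .bind .bind (.unlabel .unlabel (.label .loc)) ?_
        simp [Exp.subst]
        exact .deref .deref .loc hw
  | assign _ _ ih1 ih2 =>
    intro c H ht hH
    cases ht with
    | assign t1 t2 =>
      obtain ⟨H1, wf, f1, tf, hH1⟩ := ih1 t1 hH
      obtain ⟨H2, wa, f2, ta, hH2⟩ := ih2 t2 hH1
      cases tf with
      | loc =>
        refine ⟨_, _, .bind (v1 := .label .unit) .bind (.toLabeled .toLabeled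
          (.bind .bind f1 ?_)) (.ret .ret (.label .unit)), .unit, hH2.set ta _⟩
        simp only [Exp.subst, Exp.subst_shift_cancel, Exp.shift]
        refine .bind .bind f2 ?_
        simp [Exp.subst, Exp.shift]
        refine .bind .bind (.unlabel .unlabel (.label .loc)) ?_
        simp [Exp.subst, Exp.subst_shift_cancel]
        exact .assign .assign .loc ta.cgVal.label.pure

theorem simulation_backward (n : ℕ) : ∀ {H H1 : Heap} {c r : Exp}, CGForceN n H c H1 r →
    ∀ {h : Heap} {e : Exp}, Tr e c → HR h H →
      ∃ h1 v w, r = .label w ∧ FGEval h e h1 v ∧ Tr v (.ret (.label w)) ∧ HR h1 H1 := by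
  induction n using Nat.strong_induction_on with
  | _ n ih =>
  have value : ∀ {n : ℕ} {h H H1 : Heap} {e r w : Exp}, CGForceN n H (.ret (.label w)) H1 r →
      Tr e (.ret (.label w)) → HR h H →
      ∃ h1 v w, r = .label w ∧ FGEval h e h1 v ∧ Tr v (.ret (.label w)) ∧ HR h1 H1 := by
    intro n h H H1 e r w hf ht hH
    obtain ⟨rfl, hp⟩ := hf.inv_ret
    exact ⟨h, e, w, ht.cgVal.label.pure_eq hp, ht.fgVal.eval h, ht, hH⟩
  intro H H1 c r hf h e ht hH
  cases ht with
  | var =>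
    obtain ⟨_, hp⟩ := hf.inv_ret
    cases hp
  | tt => exact value hf .tt hH
  | ff => exact value hf .ff hH
  | unit => exact value hf .unit hH
  | loc => exact value hf .loc hH
  | lam t => exact value hf (.lam t) hH
  | pairV t1 t2 => exact value hf (.pairV t1 t2) hH
  | inlV t => exact value hf (.inlV t) hH
  | inrV t => exact value hf (.inrV t) hH
  | app t1 t2 =>
    obtain ⟨m, r', hm, hf, hr⟩ := hf.inv_coerce
    obtain ⟨m1, k1, _, _, hm1, hk1, f1, hf⟩ := hf.inv_bind
    obtain ⟨h1, vf, wf, rfl, d1, tf, hH1⟩ := ih m1 (by omega) f1 t1 hH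
    simp only [Exp.subst, Exp.subst_shift_cancel, Exp.shift] at hf
    obtain ⟨m2, k2, _, _, hm2, hk2, f2, hf⟩ := hf.inv_bind
    obtain ⟨h2, va, wa, rfl, d2, ta, hH2⟩ := ih m2 (by omega) f2 t2 hH1
    simp [Exp.subst, Exp.shift] at hf
    obtain ⟨m3, k3, H3, u, hm3, hk3, f3, hf⟩ := hf.inv_bind
    simp [Exp.subst_shift_cancel] at f3
    obtain ⟨rfl, hp⟩ := f3.inv_unlabel
    cases tf.cgVal.label.pure_eq hp
    simp [Exp.subst, Exp.subst_shift_cancel] at hf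
    obtain ⟨cb, rfl⟩ : ∃ cb, wf = .lam cb := by
      have hu : ∃ x, CGPure (.app wf (.label wa)) x := by
        cases hf <;> exact ⟨_, by assumption⟩
      obtain ⟨x, hx⟩ := hu
      cases hx with
      | app p1 => exact ⟨_, (tf.cgVal.pure_eq p1).symm⟩
    cases tf with
    | lam tb =>
      have hf' : CGForceN k3 H3 (cb.subst (.label wa) 0) H1 r' := by
        refine hf.congr fun x hx => ?_
        cases hx with
        | app p1 p2 p3 =>
          cases p1
          rwa [ta.cgVal.label.pure_eq p2] at p3
      obtain ⟨h3, v, w, rfl, d3, t3, hH3⟩ := ih k3 (by omega) hf' (tb.subst 0 ta) hH2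
      exact ⟨h3, v, w, hr t3.cgVal.label, .app d1 d2 d3, t3, hH3⟩
  | pair t1 t2 =>
    obtain ⟨m1, k1, _, _, hm1, hk1, f1, hf⟩ := hf.inv_bind
    obtain ⟨h1, v1, w1, rfl, d1, t1, hH1⟩ := ih m1 (by omega) f1 t1 hH
    simp only [Exp.subst, Exp.subst_shift_cancel, Exp.shift] at hf
    obtain ⟨m2, k2, _, _, hm2, hk2, f2, hf⟩ := hf.inv_bind
    obtain ⟨h2, v2, w2, rfl, d2, t2, hH2⟩ := ih m2 (by omega) f2 t2 hH1
    simp [Exp.subst, Exp.subst_shift_cancel] at hf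
    obtain ⟨rfl, hp⟩ := hf.inv_ret
    exact ⟨h2, _, _, (Tr.pairV t1 t2).cgVal.label.pure_eq hp, .pair d1 d2, .pairV t1 t2, hH2⟩
  | fst t =>
    obtain ⟨m, r', hm, hf, hr⟩ := hf.inv_coerce
    obtain ⟨m1, k1, _, _, hm1, hk1, f1, hf⟩ := hf.inv_bind
    obtain ⟨h1, v1, w1, rfl, d1, t1, hH1⟩ := ih m1 (by omega) f1 t hH
    simp [Exp.subst] at hf
    obtain ⟨m3, k3, _, u, hm3, hk3, f3, hf⟩ := hf.inv_bind
    obtain ⟨rfl, hp⟩ := f3.inv_unlabel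
    cases t1.cgVal.label.pure_eq hp
    simp [Exp.subst] at hf
    obtain ⟨rfl, hp⟩ := hf.inv_ret
    cases hp with
    | fst hp =>
      cases t1.cgVal.pure_eq hp
      cases t1 with
      | pairV ta tb => exact ⟨h1, _, _, hr ta.cgVal.label, .fst d1, ta, hH1⟩
  | snd t =>
    obtain ⟨m, r', hm, hf, hr⟩ := hf.inv_coerce
    obtain ⟨m1, k1, _, _, hm1, hk1, f1, hf⟩ := hf.inv_bind
    obtain ⟨h1, v1, w1, rfl, d1, t1, hH1⟩ := ih m1 (by omega) f1 t hH
    simp [Exp.subst] at hf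
    obtain ⟨m3, k3, _, u, hm3, hk3, f3, hf⟩ := hf.inv_bind
    obtain ⟨rfl, hp⟩ := f3.inv_unlabel
    cases t1.cgVal.label.pure_eq hp
    simp [Exp.subst] at hf
    obtain ⟨rfl, hp⟩ := hf.inv_ret
    cases hp with
    | snd hp =>
      cases t1.cgVal.pure_eq hp
      cases t1 with
      | pairV ta tb => exact ⟨h1, _, _, hr tb.cgVal.label, .snd d1, tb, hH1⟩
  | inl t =>
    obtain ⟨m1, k1, _, _, hm1, hk1, f1, hf⟩ := hf.inv_bind
    obtain ⟨h1, v1, w1, rfl, d1, t1, hH1⟩ := ih m1 (by omega) f1 t hH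
    simp [Exp.subst] at hf
    obtain ⟨rfl, hp⟩ := hf.inv_ret
    exact ⟨h1, _, _, (Tr.inlV t1).cgVal.label.pure_eq hp, .inl d1, .inlV t1, hH1⟩
  | inr t =>
    obtain ⟨m1, k1, _, _, hm1, hk1, f1, hf⟩ := hf.inv_bind
    obtain ⟨h1, v1, w1, rfl, d1, t1, hH1⟩ := ih m1 (by omega) f1 t hH
    simp [Exp.subst] at hf
    obtain ⟨rfl, hp⟩ := hf.inv_ret
    exact ⟨h1, _, _, (Tr.inrV t1).cgVal.label.pure_eq hp, .inr d1, .inrV t1, hH1⟩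
  | @case _ _ _ c1 _ c2 t tl tr =>
    obtain ⟨m, r', hm, hf, hr⟩ := hf.inv_coerce
    obtain ⟨m1, k1, _, _, hm1, hk1, f1, hf⟩ := hf.inv_bind
    obtain ⟨h1, v1, w1, rfl, d1, t1, hH1⟩ := ih m1 (by omega) f1 t hH
    simp [Exp.subst] at hf
    obtain ⟨m3, k3, H3, u, hm3, hk3, f3, hf⟩ := hf.inv_bind
    obtain ⟨rfl, hp⟩ := f3.inv_unlabel
    cases t1.cgVal.label.pure_eq hp
    simp [Exp.subst, Exp.subst_shift_branch] at hf
    obtain ⟨a, hu⟩ : ∃ a, w1 = .inl a ∨ w1 = .inr a := by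
      have hu : ∃ x, CGPure (.case w1 c1 c2) x := by
        cases hf <;> exact ⟨_, by assumption⟩
      obtain ⟨x, hx⟩ := hu
      cases hx with
      | caseL p => exact ⟨_, .inl (t1.cgVal.pure_eq p).symm⟩
      | caseR p => exact ⟨_, .inr (t1.cgVal.pure_eq p).symm⟩
    rcases hu with rfl | rfl
    · have hf' : CGForceN k3 H3 (c1.subst a 0) H1 r' := by
        refine hf.congr fun x hx => ?_
        cases hx with
        | caseL p q => cases t1.cgVal.pure_eq p; exact q
        | caseR p q => cases t1.cgVal.pure_eq p
      cases t1 with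
      | inlV ta =>
        obtain ⟨h2, v, w, rfl, d2, t2, hH2⟩ := ih k3 (by omega) hf' (tl.subst 0 ta) hH1
        exact ⟨h2, v, w, hr t2.cgVal.label, .caseL d1 d2, t2, hH2⟩
    · have hf' : CGForceN k3 H3 (c2.subst a 0) H1 r' := by
        refine hf.congr fun x hx => ?_
        cases hx with
        | caseL p q => cases t1.cgVal.pure_eq p
        | caseR p q => cases t1.cgVal.pure_eq p; exact q
      cases t1 with
      | inrV ta =>
        obtain ⟨h2, v, w, rfl, d2, t2, hH2⟩ := ih k3 (by omega) hf' (tr.subst 0 ta) hH1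
        exact ⟨h2, v, w, hr t2.cgVal.label, .caseR d1 d2, t2, hH2⟩
  | new t =>
    obtain ⟨m1, k1, _, _, hm1, hk1, f1, hf⟩ := hf.inv_bind
    obtain ⟨h1, v1, w1, rfl, d1, t1, hH1⟩ := ih m1 (by omega) f1 t hH
    simp [Exp.subst] at hf
    obtain ⟨m3, k3, _, u, hm3, hk3, f3, hf⟩ := hf.inv_bind
    obtain ⟨u, hp, rfl, rfl⟩ := f3.inv_new
    cases t1.cgVal.label.pure_eq hp
    simp [Exp.subst] at hf
    obtain ⟨rfl, hp⟩ := hf.inv_ret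
    refine ⟨_, _, _, (CGVal.loc.label).pure_eq hp, .new d1, ?_, hH1.append t1⟩
    rw [hH1.length]
    exact .loc
  | deref t =>
    obtain ⟨m, r', hm, hf, hr⟩ := hf.inv_coerce
    obtain ⟨m1, k1, _, _, hm1, hk1, f1, hf⟩ := hf.inv_bind
    obtain ⟨h1, v1, w1, rfl, d1, t1, hH1⟩ := ih m1 (by omega) f1 t hH
    simp [Exp.subst] at hf
    obtain ⟨m3, k3, _, u, hm3, hk3, f3, hf⟩ := hf.inv_bind
    obtain ⟨rfl, hp⟩ := f3.inv_unlabel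
    cases t1.cgVal.label.pure_eq hp
    simp [Exp.subst] at hf
    obtain ⟨k, hp, hget, rfl⟩ := hf.inv_deref
    cases t1.cgVal.pure_eq hp
    cases t1 with
    | loc =>
      obtain ⟨v, w, hv, rfl, tv⟩ := hH1.get' hget
      exact ⟨h1, v, w, hr tv.cgVal.label, .deref d1 hv, tv, hH1⟩
  | assign t1 t2 =>
    obtain ⟨m, k, _, _, hm, hk, hf, hret⟩ := hf.inv_bind
    obtain ⟨m0, _, hm0, rfl, hf0⟩ := hf.inv_toLabeled
    obtain ⟨m1, k1, _, _, hm1, hk1, f1, hf⟩ := hf0.inv_bind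
    obtain ⟨h1, vf, wf, rfl, d1, tf, hH1⟩ := ih m1 (by omega) f1 t1 hH
    simp only [Exp.subst, Exp.subst_shift_cancel, Exp.shift] at hf
    obtain ⟨m2, k2, _, _, hm2, hk2, f2, hf⟩ := hf.inv_bind
    obtain ⟨h2, va, wa, rfl, d2, ta, hH2⟩ := ih m2 (by omega) f2 t2 hH1
    simp [Exp.subst, Exp.shift] at hf
    obtain ⟨m3, k3, _, u, hm3, hk3, f3, hf⟩ := hf.inv_bind
    simp [Exp.subst_shift_cancel] at f3
    obtain ⟨rfl, hp⟩ := f3.inv_unlabel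
    cases tf.cgVal.label.pure_eq hp
    simp [Exp.subst, Exp.subst_shift_cancel] at hf
    obtain ⟨j, x, p1, p2, rfl, rfl⟩ := hf.inv_assign
    cases tf.cgVal.pure_eq p1
    cases ta.cgVal.label.pure_eq p2
    obtain ⟨rfl, hp⟩ := CGForceN.inv_ret (e := .label .unit) (by simpa [Exp.subst] using hret)
    cases tf with
    | loc =>
      exact ⟨_, _, _, CGVal.unit.label.pure_eq hp, .assign d1 d2, .unit, hH2.set ta j⟩

/-! ### Type preservation for the label-free fragment of FG -/

/-- FG types with all security labels erased. -/
inductive STy : Type where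
  | bool
  | unit
  | fn (t1 t2 : STy)
  | prod (t1 t2 : STy)
  | sum (t1 t2 : STy)
  | ref (t : STy)

/-- Erasure of security labels. -/
def FGTy.erase {L : Type} : FGTy L → STy
  | .bool _ => .bool
  | .unit _ => .unit
  | .fn t1 _ t2 _ => .fn t1.erase t2.erase
  | .prod t1 t2 _ => .prod t1.erase t2.erase
  | .sum t1 t2 _ => .sum t1.erase t2.erase
  | .ref t _ => .ref t.erase

theorem FGSub.erase_eq {L : Type} [Lattice L] [BoundedOrder L] {τ τ' : FGTy L}
    (h : FGSub τ τ') : τ.erase = τ'.erase := by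
  induction h <;> simp_all [FGTy.erase]

/-- Simple typing `S; Γ ⊢ e : t` of FG expressions, where `S` is a store typing. -/
inductive STyped (S : List STy) : List STy → Exp → STy → Prop where
  | var : Γ[n]? = some t → STyped S Γ (.var n) t
  | tt : STyped S Γ .tt .bool
  | ff : STyped S Γ .ff .bool
  | unit : STyped S Γ .unit .unit
  | loc : S[n]? = some t → STyped S Γ (.loc n) (.ref t)
  | lam : STyped S (t1 :: Γ) e t2 → STyped S Γ (.lam e) (.fn t1 t2)
  | app : STyped S Γ e1 (.fn t1 t2) → STyped S Γ e2 t1 → STyped S Γ (.app e1 e2) t2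
  | pair : STyped S Γ e1 t1 → STyped S Γ e2 t2 → STyped S Γ (.pair e1 e2) (.prod t1 t2)
  | fst : STyped S Γ e (.prod t1 t2) → STyped S Γ (.fst e) t1
  | snd : STyped S Γ e (.prod t1 t2) → STyped S Γ (.snd e) t2
  | inl : STyped S Γ e t1 → STyped S Γ (.inl e) (.sum t1 t2)
  | inr : STyped S Γ e t2 → STyped S Γ (.inr e) (.sum t1 t2)
  | case : STyped S Γ e (.sum t1 t2) → STyped S (t1 :: Γ) e1 t → STyped S (t2 :: Γ) e2 t →
      STyped S Γ (.case e e1 e2) t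
  | new : STyped S Γ e t → STyped S Γ (.new e) (.ref t)
  | deref : STyped S Γ e (.ref t) → STyped S Γ (.deref e) t
  | assign : STyped S Γ e1 (.ref t) → STyped S Γ e2 t → STyped S Γ (.assign e1 e2) .unit

theorem FG2CG.sTyped {L : Type} [Lattice L] [BoundedOrder L] {Γ : List (FGTy L)} {pc : L}
    {e c : Exp} {τ : FGTy L} (h : FG2CG Γ pc e τ c) :
    STyped [] (Γ.map FGTy.erase) e τ.erase := by
  induction h with
  | var hn => exact .var (by simp [hn])
  | tt => exact .tt
  | ff => exact .ff
  | unit => exact .unit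
  | lam _ ih => exact .lam ih
  | app _ _ _ _ ih1 ih2 => exact .app ih1 ih2
  | pair _ _ ih1 ih2 => exact .pair ih1 ih2
  | fst _ _ ih => exact .fst ih
  | snd _ _ ih => exact .snd ih
  | inl _ ih => exact .inl ih
  | inr _ ih => exact .inr ih
  | case _ _ _ _ ih ih1 ih2 => exact .case ih ih1 ih2
  | new _ _ ih => exact .new ih
  | deref _ hs _ ih => rw [← hs.erase_eq]; exact .deref ih
  | assign _ _ _ ih1 ih2 => exact .assign ih1 ih2
  | sub _ hs _ ih => rw [← hs.erase_eq]; exact ih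

theorem STyped.store_mono {S S' Γ : List STy} {e : Exp} {t : STy} (hS : S <+: S')
    (h : STyped S Γ e t) : STyped S' Γ e t := by
  induction h with
  | loc hn =>
    obtain ⟨X, rfl⟩ := hS
    obtain ⟨hl, -⟩ := List.getElem?_eq_some_iff.1 hn
    exact .loc (by rw [List.getElem?_append_left hl, hn])
  | _ => constructor <;> assumption

/-- Appended context entries are the outermost ones, so no shift is needed. -/
theorem STyped.append {S Γ : List STy} (Δ : List STy) {e : Exp} {t : STy}
    (h : STyped S Γ e t) : STyped S (Γ ++ Δ) e t := by
  induction h with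
  | var hn =>
    obtain ⟨hl, -⟩ := List.getElem?_eq_some_iff.1 hn
    exact .var (by rw [List.getElem?_append_left hl, hn])
  | _ => constructor <;> assumption

theorem STyped.shift_eq {S Γ : List STy} {e : Exp} {t : STy} (h : STyped S Γ e t) :
    ∀ {c : ℕ}, Γ.length ≤ c → e.shift c = e := by
  induction h with
  | var hn =>
    intro c hc
    obtain ⟨hl, -⟩ := List.getElem?_eq_some_iff.1 hn
    simp [Exp.shift]
    omega
  | _ => intro c hc; simp_all [Exp.shift]

theorem STyped.subst {S Δ : List STy} {e v : Exp} {t s : STy} (h : STyped S Δ e t)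
    (hv : STyped S [] v s) : ∀ {Γ : List STy}, Δ = Γ ++ [s] →
    STyped S Γ (e.subst v Γ.length) t := by
  have hsh : v.shift 0 = v := hv.shift_eq (le_refl 0)
  induction h with
  | @var Δ n t hn =>
    rintro Γ rfl
    simp only [Exp.subst]
    split_ifs with h1 h2
    · subst h1
      obtain rfl : s = t := by simpa using hn
      simpa using hv.append Γ
    · obtain ⟨hl, -⟩ := List.getElem?_eq_some_iff.1 hn
      simp at hl
      omega
    · exact .var (by rwa [List.getElem?_append_left (by omega)] at hn)
  | lam _ ih =>
    rintro Γ rfl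
    simp only [Exp.subst, hsh]
    exact .lam (ih rfl)
  | case _ _ _ ih ih1 ih2 =>
    rintro Γ rfl
    simp only [Exp.subst, hsh]
    exact .case (ih rfl) (ih1 rfl) (ih2 rfl)
  | app _ _ ih1 ih2 => rintro Γ rfl; exact .app (ih1 rfl) (ih2 rfl)
  | pair _ _ ih1 ih2 => rintro Γ rfl; exact .pair (ih1 rfl) (ih2 rfl)
  | assign _ _ ih1 ih2 => rintro Γ rfl; exact .assign (ih1 rfl) (ih2 rfl)
  | fst _ ih => rintro Γ rfl; exact .fst (ih rfl)
  | snd _ ih => rintro Γ rfl; exact .snd (ih rfl)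
  | inl _ ih => rintro Γ rfl; exact .inl (ih rfl)
  | inr _ ih => rintro Γ rfl; exact .inr (ih rfl)
  | new _ ih => rintro Γ rfl; exact .new (ih rfl)
  | deref _ ih => rintro Γ rfl; exact .deref (ih rfl)
  | loc hn => rintro Γ rfl; exact .loc hn
  | tt => rintro Γ rfl; exact .tt
  | ff => rintro Γ rfl; exact .ff
  | unit => rintro Γ rfl; exact .unit

/-- The heap `h` is well typed with respect to the store typing `S`. -/
def HeapTyped (S : List STy) (h : Heap) : Prop :=
  h.length = S.length ∧ ∀ (n : ℕ) v t, h[n]? = some v → S[n]? = some t → STyped S [] v t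

theorem preservation {h h1 : Heap} {e v : Exp} (he : FGEval h e h1 v) :
    ∀ {S : List STy} {t : STy}, STyped S [] e t → HeapTyped S h →
      ∃ S', S <+: S' ∧ STyped S' [] v t ∧ HeapTyped S' h1 := by
  induction he with
  | lam | tt | ff | unit | loc => intro S t ht hh; exact ⟨S, List.prefix_refl S, ht, hh⟩
  | app _ _ _ ih1 ih2 ih3 =>
    intro S t ht hh
    cases ht with
    | app a b =>
      obtain ⟨S1, p1, a, hh⟩ := ih1 a hh
      obtain ⟨S2, p2, b, hh⟩ := ih2 (b.store_mono p1) hh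
      cases a.store_mono p2 with
      | lam a =>
        obtain ⟨S3, p3, c, hh⟩ := ih3 (a.subst b (Γ := []) rfl) hh
        exact ⟨S3, (p1.trans p2).trans p3, c, hh⟩
  | pair _ _ ih1 ih2 =>
    intro S t ht hh
    cases ht with
    | pair a b =>
      obtain ⟨S1, p1, a, hh⟩ := ih1 a hh
      obtain ⟨S2, p2, b, hh⟩ := ih2 (b.store_mono p1) hh
      exact ⟨S2, p1.trans p2, .pair (a.store_mono p2) b, hh⟩
  | fst _ ih =>
    intro S t ht hh
    cases ht with
    | fst a =>
      obtain ⟨S1, p1, a, hh⟩ := ih a hh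
      cases a with
      | pair a b => exact ⟨S1, p1, a, hh⟩
  | snd _ ih =>
    intro S t ht hh
    cases ht with
    | snd a =>
      obtain ⟨S1, p1, a, hh⟩ := ih a hh
      cases a with
      | pair a b => exact ⟨S1, p1, b, hh⟩
  | inl _ ih =>
    intro S t ht hh
    cases ht with
    | inl a =>
      obtain ⟨S1, p1, a, hh⟩ := ih a hh
      exact ⟨S1, p1, .inl a, hh⟩
  | inr _ ih =>
    intro S t ht hh
    cases ht with
    | inr a =>
      obtain ⟨S1, p1, a, hh⟩ := ih a hh
      exact ⟨S1, p1, .inr a, hh⟩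
  | caseL _ _ ih ih1 =>
    intro S t ht hh
    cases ht with
    | case a b c =>
      obtain ⟨S1, p1, a, hh⟩ := ih a hh
      cases a with
      | inl a =>
        obtain ⟨S2, p2, d, hh⟩ := ih1 ((b.store_mono p1).subst a (Γ := []) rfl) hh
        exact ⟨S2, p1.trans p2, d, hh⟩
  | caseR _ _ ih ih1 =>
    intro S t ht hh
    cases ht with
    | case a b c =>
      obtain ⟨S1, p1, a, hh⟩ := ih a hh
      cases a with
      | inr a =>
        obtain ⟨S2, p2, d, hh⟩ := ih1 ((c.store_mono p1).subst a (Γ := []) rfl) hh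
        exact ⟨S2, p1.trans p2, d, hh⟩
  | new _ ih =>
    intro S t ht hh
    cases ht with
    | @new _ _ t a =>
      obtain ⟨S1, p1, a, hl, hh⟩ := ih a hh
      have p2 : S1 <+: S1 ++ [t] := List.prefix_append _ _
      refine ⟨S1 ++ [t], p1.trans p2, .loc (by simp [hl]), by simp [hl], ?_⟩
      intro n u s hu hs
      rcases lt_or_ge n S1.length with hn | hn
      · rw [List.getElem?_append_left (by omega)] at hu hs
        exact (hh n u s hu hs).store_mono p2
      · rw [List.getElem?_append_right (by omega)] at hu hs
        rw [hl] at hu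
        obtain ⟨hn', rfl⟩ := List.getElem?_eq_some_iff.1 hs
        obtain ⟨_, rfl⟩ := List.getElem?_eq_some_iff.1 hu
        simpa using a.store_mono p2
  | deref _ hn ih =>
    intro S t ht hh
    cases ht with
    | deref a =>
      obtain ⟨S1, p1, a, hl, hh⟩ := ih a hh
      cases a with
      | loc ha => exact ⟨S1, p1, hh _ _ _ hn ha, hl, hh⟩
  | assign _ _ ih1 ih2 =>
    intro S t ht hh
    cases ht with
    | assign a b =>
      obtain ⟨S1, p1, a, hh⟩ := ih1 a hh
      obtain ⟨S2, p2, b, hl, hh⟩ := ih2 (b.store_mono p1) hh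
      refine ⟨S2, p1.trans p2, .unit, by simpa using hl, ?_⟩
      cases a.store_mono p2 with
      | loc ha =>
        intro m u s hu hs
        rw [List.getElem?_set] at hu
        split_ifs at hu with h1 h2
        · subst h1
          cases hu
          cases ha.symm.trans hs
          exact b
        · exact hh m u s hu hs

/-- At boolean type, related values coincide. -/
theorem Tr.eq_of_bool {S : List STy} {v w : Exp} (ht : Tr v (.ret (.label w)))
    (hv : STyped S [] v .bool) : w = v := by
  cases ht <;> first | rfl | cases hv

theorem fg2cg_semantics_preservation
    {L : Type} [Lattice L] [BoundedOrder L]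
    (pc l : L) (es ec : Exp)
    (htr : FG2CG ([] : List (FGTy L)) pc es (FGTy.bool l) ec) :
    (∀ (h : Heap) (v : Exp), FGEval [] es h v →
        ∃ h' : Heap, CGForce [] ec h' (Exp.label v)) ∧
    (∀ (h' : Heap) (r : Exp), CGForce [] ec h' r →
        ∃ (h : Heap) (v : Exp), FGEval [] es h v ∧ r = Exp.label v) := by
  have result_bool : ∀ {h : Heap} {v w : Exp}, FGEval [] es h v → Tr v (.ret (.label w)) →
      w = v := by
    intro h v w he ht
    obtain ⟨S, -, hv, -⟩ := preservation he htr.sTyped ⟨rfl, by simp⟩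
    exact ht.eq_of_bool hv
  refine ⟨fun h v he => ?_, fun h' r hf => ?_⟩
  · obtain ⟨H, w, hf, ht, -⟩ := simulation_forward he htr.tr .nil
    exact ⟨H, result_bool he ht ▸ hf⟩
  · obtain ⟨n, hn⟩ := hf.toN
    obtain ⟨h, v, w, rfl, he, ht, -⟩ := simulation_backward n hn htr.tr .nil
    exact ⟨h, v, he, by rw [result_bool he ht]⟩
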